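/- Let T ∈ 𝒫_f(ℙ). Then the following two statements are equivalent. (1) For all r, m ∈ ℕ with r, m ≥ 1 and every partition ℕ^m = C₁ ∪ ⋯ ∪ C_r, there exist j ∈ {1,…,r} and functions α₁,…,α_m : 𝒫_f(ℕ^ℕ) → ℕ and H₁,…,H_m : 𝒫_f(ℕ^ℕ) → 𝒫_f(ℕ) such that (a) whenever F ⊊ G in 𝒫_f(ℕ^ℕ), max H_l(F) < min H_l(G) for every l ∈ {1,…,m}, and (b) whenever G₁ ⊊ G₂ ⊊ ⋯ is an infinite strictly increasing chain in 𝒫_f(ℕ^ℕ), f_i ∈ G_i for each i ∈ ℕ, P₁,…,P_m ∈ T, and β₁ < ⋯ < β_m are in 𝒫_f(ℕ), then (Σ_{i∈β₁}α₁(G_i) + P₁(Σ_{i∈β₁}Σ_{t∈H₁(G_i)}f_i(t)), …, Σ_{i∈β_m}α_m(G_i) + P_m(Σ_{i∈β_m}Σ_{t∈H_m(G_i)}f_i(t))) ∈ C_j. (2) For all r, m ∈ ℕ with r, m ≥ 1, all a₁,…,a_m ∈ ℕ, and every partition ℕ = D₁ ∪ ⋯ ∪ D_r, there exist j ∈ {1,…,r}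 and functions α₁,…,α_m, H₁,…,H_m as above satisfying (a) and such that for every infinite strictly increasing chain G₁ ⊊ G₂ ⊊ ⋯ in 𝒫_f(ℕ^ℕ), all f_i ∈ G_i, all P₁,…,P_m ∈ T, and all β₁ < ⋯ < β_m in 𝒫_f(ℕ), one has Σ_{l=1}^m a_l·(Σ_{i∈β_l}α_l(G_i) + P_l(Σ_{i∈β_l}Σ_{t∈H_l(G_i)}f_i(t))) ∈ D_j. -/

import Mathlib

namespace MultiCST

/-- The sum `p + q` of ultrafilters on ℕ: `A ∈ p + q` iff `{x : {y : x+y ∈ A} ∈ q} ∈ p`. -/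
def uAdd (p q : Ultrafilter ℕ) : Ultrafilter ℕ :=
  p.bind fun x => q.map fun y => x + y

/-- `A ⊆ ℕ` is a J-set. -/
def IsJSet (A : Set ℕ) : Prop :=
  ∀ F : Finset (ℕ → ℕ), F.Nonempty →
    ∃ (a : ℕ) (β : Finset ℕ), β.Nonempty ∧ ∀ f ∈ F, a + ∑ t ∈ β, f t ∈ A

/-- `p ∈ 𝒥`: every member of `p` is a J-set. -/
def MemJ (p : Ultrafilter ℕ) : Prop := ∀ A : Set ℕ, A ∈ p → IsJSet A

/-- `p` is an idempotent ultrafilter. -/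
def IdempotentUF (p : Ultrafilter ℕ) : Prop := uAdd p p = p

/-- `p` is a minimal idempotent ultrafilter. -/
def IsMinimalIdempotent (p : Ultrafilter ℕ) : Prop :=
  IdempotentUF p ∧
    ∀ q : Ultrafilter ℕ, IdempotentUF q → uAdd q p = q → uAdd p q = q → q = p

/-- Tensor product `⊗_{i=1}^m p_i` of ultrafilters on ℕ, as an ultrafilter on `Fin m → ℕ`. -/
def tensor : ∀ m : ℕ, (Fin m → Ultrafilter ℕ) → Ultrafilter (Fin m → ℕ)
  | 0, _ => pure fun i => i.elim0
  | m + 1, p =>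
      (p 0).bind fun x => (tensor m fun i => p i.succ).map fun v => Fin.cons x v

/-- `f : ℕ → ℕ` is (given by) a polynomial with coefficients in ℕ and zero constant term. -/
def IsPolyZeroConst (f : ℕ → ℕ) : Prop :=
  ∃ P : Polynomial ℕ, P.coeff 0 = 0 ∧ ∀ x, f x = P.eval x

/-- The linear combination `a₁·p₁ + a₂·p₂ + ⋯ + a_m·p_m` of ultrafilters on ℕ. -/
def linComb : ∀ m : ℕ, (Fin m → ℕ) → (Fin m → Ultrafilter ℕ) → Ultrafilter ℕ
  | 0, _, _ => pure 0
  | m + 1, a, p =>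
      uAdd ((p 0).map fun x => a 0 * x)
        (linComb m (fun i => a i.succ) fun i => p i.succ)

/-!
A colouring of `ℕ` pulls back along `x ↦ ∑ l, a l * x l` to a colouring of `ℕ ^ m`, so the
multidimensional form implies the linear one. For the converse, the multidimensional form holds
outright. Colour focusing together with induction on the degree, where shifting a polynomial map
changes it by a map of lower degree, gives a polynomial van der Waerden theorem along IP sets. By
this theorem the ultrafilters all of whose members are polynomial J-sets form a nonempty closed
subsemigroup of `βℕ`, which contains an idempotent `p` by Ellis' lemma. If `A ∈ p`, the functions
`α` and `H` are built by recursion on finite sets: every partial sum stays in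
`{x ∈ A | A - x ∈ p}`, which leaves room for the next term. Colour classes in the tensor power of
`p` then give the `m`-tuples, one coordinate after the other.
-/

section PolynomialMaps

variable {V W : Type*} [AddCommGroup V] [AddCommGroup W]

/-- The shift `x ↦ φ (x + u)`, normalized by a constant so as to vanish at `0`. -/
def normShift (u : V) : (V → W) →+ (V → W) where
  toFun φ x := φ (x + u) - φ u
  map_zero' := by ext; simp
  map_add' φ ψ := by ext; simp only [Pi.add_apply]; abel

@[simp]
theorem normShift_apply (u : V) (φ : V → W) (x : V) : normShift u φ x = φ (x + u) - φ u := rfl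

/-- The group of polynomial maps `V → W` of degree at most `d` that vanish at `0`, defined
through normalized differences. Vanishing at `0` is forced by the case `u = 0` of the recursion. -/
def polyMap (V W : Type*) [AddCommGroup V] [AddCommGroup W] : ℕ → AddSubgroup (V → W)
  | 0 => ⊥
  | d + 1 => ⨅ u : V, (polyMap V W d).comap (normShift u - AddMonoidHom.id (V → W))

theorem mem_polyMap_zero {φ : V → W} : φ ∈ polyMap V W 0 ↔ φ = 0 :=
  AddSubgroup.mem_bot

theorem mem_polyMap_succ {d : ℕ} {φ : V → W} :
    φ ∈ polyMap V W (d + 1) ↔ ∀ u, normShift u φ - φ ∈ polyMap V W d := by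
  simp only [polyMap, AddSubgroup.mem_iInf, AddSubgroup.mem_comap, AddMonoidHom.sub_apply,
    AddMonoidHom.id_apply]

theorem apply_zero_of_mem_polyMap {d : ℕ} {φ : V → W} (hφ : φ ∈ polyMap V W d) : φ 0 = 0 := by
  induction d generalizing φ with
  | zero => rw [mem_polyMap_zero.1 hφ, Pi.zero_apply]
  | succ d ih => simpa using ih (mem_polyMap_succ.1 hφ 0)

theorem polyMap_mono : Monotone (polyMap V W) := by
  refine monotone_nat_of_le_succ fun d => ?_
  induction d with
  | zero => exact bot_le
  | succ d ih => exact fun φ hφ => mem_polyMap_succ.2 fun u => ih (mem_polyMap_succ.1 hφ u)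

theorem addMonoidHom_mem_polyMap (π : V →+ W) : ⇑π ∈ polyMap V W 1 :=
  mem_polyMap_succ.2 fun u => mem_polyMap_zero.2 <| by ext x; simp

end PolynomialMaps

section PolynomialFunctions

variable {V W : Type*} [AddCommGroup V] [CommRing W]

theorem smul_mem_polyMap {d : ℕ} {φ : V → W} (c : W) (hφ : φ ∈ polyMap V W d) :
    c • φ ∈ polyMap V W d := by
  induction d generalizing φ with
  | zero => rw [mem_polyMap_zero.1 hφ, smul_zero]; exact zero_mem _
  | succ d ih =>
    refine mem_polyMap_succ.2 fun u => ?_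
    convert ih (mem_polyMap_succ.1 hφ u) using 1
    ext x
    simp only [Pi.sub_apply, Pi.smul_apply, normShift_apply, smul_eq_mul]
    ring

theorem addMonoidHom_mul_mem_polyMap (π : V →+ W) {d : ℕ} {φ : V → W}
    (hφ : φ ∈ polyMap V W d) : ⇑π * φ ∈ polyMap V W (d + 1) := by
  induction d generalizing φ with
  | zero => rw [mem_polyMap_zero.1 hφ, mul_zero]; exact zero_mem _
  | succ d ih =>
    refine mem_polyMap_succ.2 fun u => ?_
    set δ := normShift u φ - φ with hδ
    have hδ_mem : δ ∈ polyMap V W d := mem_polyMap_succ.1 hφ u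
    have leibniz : normShift u (⇑π * φ) - ⇑π * φ = ⇑π * δ + π u • δ + φ u • ⇑π + π u • φ := by
      ext x
      simp only [hδ, Pi.add_apply, Pi.sub_apply, Pi.mul_apply, Pi.smul_apply, normShift_apply,
        map_add, smul_eq_mul]
      ring
    rw [leibniz]
    exact add_mem (add_mem (add_mem (ih hδ_mem)
      (smul_mem_polyMap _ (polyMap_mono d.le_succ hδ_mem)))
      (smul_mem_polyMap _ (polyMap_mono (by lia) (addMonoidHom_mem_polyMap π))))
      (smul_mem_polyMap _ hφ)

theorem addMonoidHom_pow_mem_polyMap (π : V →+ W) (n : ℕ) :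
    ⇑π ^ (n + 1) ∈ polyMap V W (n + 1) := by
  induction n with
  | zero => simpa using addMonoidHom_mem_polyMap π
  | succ n ih => rw [pow_succ']; exact addMonoidHom_mul_mem_polyMap π ih

theorem aeval_comp_mem_polyMap {R : Type*} [CommSemiring R] [Algebra R W] (π : V →+ W)
    {P : Polynomial R} (hP : P.coeff 0 = 0) :
    (fun v => P.aeval (π v)) ∈ polyMap V W P.natDegree := by
  have expand : (fun v => P.aeval (π v)) =
      ∑ i ∈ Finset.range (P.natDegree + 1), algebraMap R W (P.coeff i) • ⇑π ^ i := by
    ext v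
    simp [Polynomial.aeval_eq_sum_range, Algebra.smul_def]
  rw [expand]
  refine sum_mem fun i hi => ?_
  rcases i with - | i
  · simp [hP]
  · exact smul_mem_polyMap _ (polyMap_mono (Finset.mem_range_succ_iff.1 hi)
      (addMonoidHom_pow_mem_polyMap π i))

end PolynomialFunctions

section ColorFocusing

universe u

variable {V : Type*} {W : Type u} [AddCommGroup V] [AddCommGroup W]

/-- A family of nonempty finite sets of natural numbers exceeding `n`. -/
def IsBlockFamily (n : ℕ) (K : Finset (Finset ℕ)) : Prop :=
  ∀ H ∈ K, H.Nonempty ∧ ∀ t ∈ H, n < t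

theorem isBlockFamily_singleton (n : ℕ) : IsBlockFamily n {{n + 1}} := by
  simp [IsBlockFamily]

theorem IsBlockFamily.anti {n n' : ℕ} (hn : n ≤ n') {K : Finset (Finset ℕ)}
    (hK : IsBlockFamily n' K) : IsBlockFamily n K :=
  fun H hH => ⟨(hK H hH).1, fun t ht => hn.trans_lt ((hK H hH).2 t ht)⟩

theorem IsBlockFamily.union {n : ℕ} {K K' : Finset (Finset ℕ)} (hK : IsBlockFamily n K)
    (hK' : IsBlockFamily n K') : IsBlockFamily n (K ∪ K') :=
  fun H hH => (Finset.mem_union.1 hH).elim (hK H) (hK' H)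

theorem IsBlockFamily.image₂_union {n : ℕ} {K K' : Finset (Finset ℕ)} (hK : IsBlockFamily n K)
    (hK' : IsBlockFamily n K') : IsBlockFamily n (Finset.image₂ (· ∪ ·) K K') := by
  intro J hJ
  obtain ⟨H, hH, H', hH', rfl⟩ := Finset.mem_image₂.1 hJ
  exact ⟨(hK H hH).1.inl, fun t ht =>
    (Finset.mem_union.1 ht).elim ((hK H hH).2 t) ((hK' H' hH').2 t)⟩

theorem IsBlockFamily.disjoint {K K' : Finset (Finset ℕ)}
    (hK' : IsBlockFamily ((K.biUnion id).sup id) K') {H L : Finset ℕ} (hH : H ∈ K)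
    (hL : L ∈ K') : Disjoint H L :=
  Finset.disjoint_left.2 fun _ htH htL => ((hK' L hL).2 _ htL).not_ge
    (Finset.le_sup (f := id) (Finset.mem_biUnion.2 ⟨H, hH, htH⟩))

/-- `S` is a van der Waerden family along `g`: for every finite colouring `χ` of `W`, some
translate of the configuration `{φ (∑ t ∈ H, g t) : φ ∈ S}` is monochromatic. In this finitary
form the translation and the block `H` come from finite sets chosen independently of `χ`. -/
def IsVdWFamily (g : ℕ → V) (S : Set (V → W)) : Prop :=
  ∀ (κ : Type u) [Finite κ] (n : ℕ), ∃ (M : Finset W) (K : Finset (Finset ℕ)),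
    IsBlockFamily n K ∧
      ∀ χ : W → κ, ∃ a ∈ M, ∃ H ∈ K, ∃ c, ∀ φ ∈ S, χ (a + φ (∑ t ∈ H, g t)) = c

/-- The colour `c` is focused at `a`: some block from `K` moves `a`, through every map of `R`, to
points of colour `c`. -/
def IsFocused {κ : Type*} (g : ℕ → V) (R : Set (V → W)) (χ : W → κ) (K : Finset (Finset ℕ))
    (a : W) (c : κ) : Prop :=
  ∃ H ∈ K, ∀ φ ∈ R, χ (a + φ (∑ t ∈ H, g t)) = c

/-- Stage `s` of colour focusing at `a`: the colour of `a` itself or at least `s` different colours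
are focused there. -/
def IsFocalPoint {κ : Type*} (g : ℕ → V) (R : Set (V → W)) (χ : W → κ) (K : Finset (Finset ℕ))
    (a : W) (s : ℕ) : Prop :=
  IsFocused g R χ K a (χ a) ∨ ∃ C : Finset κ, C.card = s ∧ ∀ c ∈ C, IsFocused g R χ K a c

variable {g : ℕ → V}

theorem IsVdWFamily.anti {S S' : Set (V → W)} (hS : IsVdWFamily g S) (h : S' ⊆ S) :
    IsVdWFamily g S' := by
  intro κ _ n
  obtain ⟨M, K, hK, hmono⟩ := hS κ n
  refine ⟨M, K, hK, fun χ => ?_⟩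
  obtain ⟨a, ha, H, hH, c, hc⟩ := hmono χ
  exact ⟨a, ha, H, hH, c, fun φ hφ => hc φ (h hφ)⟩

theorem isVdWFamily_singleton_zero : IsVdWFamily g ({0} : Set (V → W)) := fun κ _ n =>
  ⟨{0}, {{n + 1}}, isBlockFamily_singleton n,
    fun χ => ⟨0, by simp, {n + 1}, by simp, χ 0, by simp⟩⟩

theorem IsVdWFamily.of_image_sub {S : Set (V → W)} (ψ : V → W)
    (hS : IsVdWFamily g ((· - ψ) '' S)) : IsVdWFamily g S := by
  classical
  intro κ _ n
  obtain ⟨M, K, hK, hmono⟩ := hS κ n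
  refine ⟨Finset.image₂ (fun a H => a - ψ (∑ t ∈ H, g t)) M K, K, hK, fun χ => ?_⟩
  obtain ⟨a, ha, H, hH, c, hc⟩ := hmono χ
  refine ⟨_, Finset.mem_image₂_of_mem ha hH, H, hH, c, fun φ hφ => ?_⟩
  rw [← hc _ (Set.mem_image_of_mem _ hφ), Pi.sub_apply, sub_add_eq_add_sub, add_sub_assoc]

section IsFocused

variable {κ : Type*} {R : Set (V → W)} {χ : W → κ} {K K' : Finset (Finset ℕ)} {a : W} {c : κ}

theorem IsFocused.mono (h : IsFocused g R χ K a c) (hK : K ⊆ K') : IsFocused g R χ K' a c :=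
  h.imp fun _ hH => ⟨hK hH.1, hH.2⟩

theorem IsFocused.of_translate {x : W} (h : IsFocused g R (fun w => χ (x + w)) K a c) :
    IsFocused g R χ K (x + a) c := by
  simpa only [IsFocused, add_assoc] using h

theorem IsFocused.image₂_union {χ' : W → κ} {b : W} {L : Finset ℕ} (h : IsFocused g R χ' K a c)
    (hL : L ∈ K') (hdisj : ∀ H ∈ K, Disjoint H L)
    (hχ' : ∀ H ∈ K, ∀ φ ∈ R, χ (b + normShift (∑ t ∈ H, g t) φ (∑ t ∈ L, g t) +
      (a + φ (∑ t ∈ H, g t))) = χ' (a + φ (∑ t ∈ H, g t))) :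
    IsFocused g R χ (Finset.image₂ (· ∪ ·) K K') (b + a) c := by
  obtain ⟨H, hH, hc⟩ := h
  refine ⟨H ∪ L, Finset.mem_image₂_of_mem hH hL, fun φ hφ => ?_⟩
  rw [← hc φ hφ, ← hχ' H hH φ hφ, Finset.sum_union (hdisj H hH), normShift_apply,
    add_comm (∑ t ∈ H, g t)]
  congr 1
  abel

theorem IsFocalPoint.mono {s : ℕ} (h : IsFocalPoint g R χ K a s) (hK : K ⊆ K') :
    IsFocalPoint g R χ K' a s :=
  h.imp (·.mono hK) fun ⟨C, hC, hfocus⟩ => ⟨C, hC, fun c hc => (hfocus c hc).mono hK⟩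

/-- If the colour of `x + a` is not yet focused, then at `b + a` it joins, through the block `L`,
the `s` colours that are already focused. -/
theorem IsFocalPoint.translate_or_succ {x b : W} {L : Finset ℕ} {s : ℕ}
    (h : IsFocalPoint g R (fun w => χ (x + w)) K a s) (hL : L ∈ K')
    (hdisj : ∀ H ∈ K, Disjoint H L)
    (hbase : ∀ φ ∈ R, χ (b + a + φ (∑ t ∈ L, g t)) = χ (x + a))
    (hblock : ∀ H ∈ K, ∀ φ ∈ R, χ (b + normShift (∑ t ∈ H, g t) φ (∑ t ∈ L, g t) +
      (a + φ (∑ t ∈ H, g t))) = χ (x + (a + φ (∑ t ∈ H, g t)))) :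
    IsFocalPoint g R χ K (x + a) (s + 1) ∨
      IsFocalPoint g R χ (K' ∪ Finset.image₂ (· ∪ ·) K K') (b + a) (s + 1) := by
  rcases h with hfocus | ⟨C, hC, hfocus⟩
  · exact Or.inl (Or.inl hfocus.of_translate)
  by_cases hcC : χ (x + a) ∈ C
  · exact Or.inl (Or.inl (hfocus _ hcC).of_translate)
  classical
  refine Or.inr (Or.inr ⟨insert (χ (x + a)) C, by rw [Finset.card_insert_of_notMem hcC, hC],
    (Finset.forall_mem_insert _ _ _).2 ⟨⟨L, Finset.mem_union_left _ hL, hbase⟩, fun c hc => ?_⟩⟩)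
  exact ((hfocus c hc).image₂_union hL hdisj hblock).mono Finset.subset_union_right

end IsFocused

theorem IsVdWFamily.exists_eq_on_window {S : Set (V → W)} (hS : IsVdWFamily g S) (κ : Type u)
    [Finite κ] (n : ℕ) {Ω : Set W} (hΩ : Ω.Finite) :
    ∃ (M : Finset W) (K : Finset (Finset ℕ)), IsBlockFamily n K ∧
      ∀ χ : W → κ, ∃ a ∈ M, ∃ H ∈ K, ∀ φ ∈ S, ∀ ψ ∈ S, ∀ w ∈ Ω,
        χ (a + φ (∑ t ∈ H, g t) + w) = χ (a + ψ (∑ t ∈ H, g t) + w) := by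
  have : Finite Ω := hΩ
  -- Colour a point `x` by the pattern that `χ` shows on the finite window `x + Ω`.
  obtain ⟨M, K, hK, hM⟩ := hS (Ω → κ) n
  refine ⟨M, K, hK, fun χ => ?_⟩
  obtain ⟨a, ha, H, hH, pattern, hpattern⟩ := hM fun x w => χ (x + w)
  exact ⟨a, ha, H, hH, fun φ hφ ψ hψ w hw =>
    congrFun ((hpattern φ hφ).trans (hpattern ψ hψ).symm) ⟨w, hw⟩⟩

theorem IsVdWFamily.exists_normShift_eq_on_window {R : Set (V → W)} {U : Set V}
    (hUR : IsVdWFamily g (Set.image2 (fun u φ => normShift u φ) U R)) (h0U : 0 ∈ U)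
    {φ₀ : V → W} (hφ₀ : φ₀ ∈ R) (hφ₀_zero : φ₀ 0 = 0) (κ : Type u) [Finite κ] (n : ℕ)
    {Ω : Set W} (hΩ : Ω.Finite) :
    ∃ (M : Finset W) (K : Finset (Finset ℕ)), IsBlockFamily n K ∧
      ∀ χ : W → κ, ∃ b ∈ M, ∃ L ∈ K, ∀ u ∈ U, ∀ φ ∈ R, ∀ w ∈ Ω,
        χ (b + normShift u φ (∑ t ∈ L, g t) + w) = χ (b + φ₀ (∑ t ∈ L, g t) + w) := by
  obtain ⟨M, K, hK, hM⟩ := hUR.exists_eq_on_window κ n hΩ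
  refine ⟨M, K, hK, fun χ => ?_⟩
  obtain ⟨b, hb, L, hL, hwindow⟩ := hM χ
  refine ⟨b, hb, L, hL, fun u hu φ hφ w hw => ?_⟩
  simpa [hφ₀_zero] using hwindow _ (Set.mem_image2_of_mem hu hφ) _
    (Set.mem_image2_of_mem h0U hφ₀) w hw

open scoped Pointwise in
theorem exists_isFocalPoint {κ : Type u} [Finite κ] {R : Set (V → W)} (hR : R.Finite)
    (hR₀ : ∀ φ ∈ R, φ 0 = 0) {φ₀ : V → W} (hφ₀ : φ₀ ∈ R)
    (hshift : ∀ U : Set V, U.Finite → IsVdWFamily g (Set.image2 (fun u φ => normShift u φ) U R))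
    (n s : ℕ) :
    ∃ (M : Finset W) (K : Finset (Finset ℕ)), IsBlockFamily n K ∧
      ∀ χ : W → κ, ∃ a ∈ M, IsFocalPoint g R χ K a s := by
  induction s with
  | zero => exact ⟨{0}, ∅, by simp [IsBlockFamily], fun χ => ⟨0, by simp, Or.inr ⟨∅, by simp⟩⟩⟩
  | succ s ih =>
    classical
    obtain ⟨M, K, hK, hM⟩ := ih
    set U : Set V := insert 0 ((fun H => ∑ t ∈ H, g t) '' (K : Set (Finset ℕ)))
    set Ω : Set W := Set.image2 (· + ·) M (Set.image2 (fun φ u => φ u) R U)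
    have hU : U.Finite := (K.finite_toSet.image _).insert _
    have hΩ_finite : Ω.Finite := M.finite_toSet.image2 _ (hR.image2 _ hU)
    have h0U : 0 ∈ U := Set.mem_insert _ _
    have hHU {H} (hH : H ∈ K) : ∑ t ∈ H, g t ∈ U := Or.inr ⟨H, hH, rfl⟩
    have hΩ {a φ u} (ha : a ∈ M) (hφ : φ ∈ R) (hu : u ∈ U) : a + φ u ∈ Ω :=
      Set.mem_image2_of_mem ha (Set.mem_image2_of_mem hφ hu)
    obtain ⟨M', K', hK', hM'⟩ := (hshift U hU).exists_normShift_eq_on_window h0U hφ₀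
      (hR₀ φ₀ hφ₀) κ (max n ((K.biUnion id).sup id)) hΩ_finite
    have hK'n := hK'.anti (le_max_left n _)
    refine ⟨(M' ∪ Finset.image₂ (fun b L => b + φ₀ (∑ t ∈ L, g t)) M' K') + M,
      K ∪ (K' ∪ Finset.image₂ (· ∪ ·) K K'), hK.union (hK'n.union (hK.image₂_union hK'n)),
      fun χ => ?_⟩
    obtain ⟨b, hb, L, hL, same⟩ := hM' χ
    set x := b + φ₀ (∑ t ∈ L, g t)
    obtain ⟨a, ha, hfocal⟩ := hM fun w => χ (x + w)
    have hbase : ∀ φ ∈ R, χ (b + a + φ (∑ t ∈ L, g t)) = χ (x + a) := fun φ hφ => by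
      simpa [hR₀ φ hφ, add_right_comm] using
        same 0 h0U φ hφ a (by simpa [hR₀ φ₀ hφ₀] using hΩ ha hφ₀ h0U)
    rcases hfocal.translate_or_succ hL
      (fun H hH => (hK'.anti (le_max_right n _)).disjoint hH hL) hbase
      (fun H hH φ hφ => same _ (hHU hH) φ hφ _ (hΩ ha hφ (hHU hH))) with h | h
    · exact ⟨x + a, Finset.add_mem_add
        (Finset.mem_union_right _ (Finset.mem_image₂_of_mem hb hL)) ha,
        h.mono Finset.subset_union_left⟩
    · exact ⟨b + a, Finset.add_mem_add (Finset.mem_union_left _ hb) ha,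
        h.mono Finset.subset_union_right⟩

theorem isVdWFamily_insert_zero {R : Set (V → W)} (hR : R.Finite) (hR₀ : ∀ φ ∈ R, φ 0 = 0)
    (hshift : ∀ U : Set V, U.Finite →
      IsVdWFamily g (Set.image2 (fun u φ => normShift u φ) U R)) :
    IsVdWFamily g (insert 0 R) := by
  rcases R.eq_empty_or_nonempty with rfl | ⟨φ₀, hφ₀⟩
  · simpa using isVdWFamily_singleton_zero
  intro κ _ n
  have : Fintype κ := Fintype.ofFinite κ
  obtain ⟨M, K, hK, hM⟩ := exists_isFocalPoint (κ := κ) hR hR₀ hφ₀ hshift n (Fintype.card κ + 1)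
  refine ⟨M, K, hK, fun χ => ?_⟩
  obtain ⟨a, ha, ⟨H, hH, hc⟩ | ⟨C, hC, -⟩⟩ := hM χ
  · refine ⟨a, ha, H, hH, χ a, (Set.forall_mem_insert).2 ⟨by simp, hc⟩⟩
  · exact absurd C.card_le_univ (by lia)

/-- A class of van der Waerden families that is stable under shifting the maps and under
subtracting polynomial maps of degree at most `d`. -/
structure IsPolyStable (g : ℕ → V) (d : ℕ) (𝓡 : Set (Set (V → W))) : Prop where
  finite : ∀ R ∈ 𝓡, R.Finite
  apply_zero : ∀ R ∈ 𝓡, ∀ φ ∈ R, φ 0 = 0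
  image_shift_mem : ∀ R ∈ 𝓡, ∀ U : Set V, U.Finite → Set.image2 (fun u φ => normShift u φ) U R ∈ 𝓡
  image_sub_mem : ∀ R ∈ 𝓡, ∀ ψ ∈ polyMap V W d, (· - ψ) '' R ∈ 𝓡
  isVdWFamily : ∀ R ∈ 𝓡, IsVdWFamily g R

/-- The families of `𝓡`, enlarged by finitely many maps from the cosets `Q i + polyMap V W d`. -/
def adjoinCosets {k : ℕ} (d : ℕ) (Q : Fin k → V → W) (𝓡 : Set (Set (V → W))) :
    Set (Set (V → W)) :=
  {X | ∃ S R, S.Finite ∧ (∀ φ ∈ S, ∃ i, φ - Q i ∈ polyMap V W d) ∧ R ∈ 𝓡 ∧ S ∪ R = X}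

theorem isPolyStable_adjoinCosets {d k : ℕ} {𝓡 : Set (Set (V → W))}
    (h𝓡 : IsPolyStable g (d + 1) 𝓡) {Q : Fin k → V → W} (hQ : ∀ i, Q i ∈ polyMap V W (d + 1))
    (hVdW : ∀ X ∈ adjoinCosets d Q 𝓡, IsVdWFamily g X) :
    IsPolyStable g d (adjoinCosets d Q 𝓡) := by
  have hle := polyMap_mono (V := V) (W := W) d.le_succ
  have mem_succ {φ : V → W} {i} (h : φ - Q i ∈ polyMap V W d) : φ ∈ polyMap V W (d + 1) := by
    simpa using add_mem (hle h) (hQ i)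
  refine ⟨?finite, ?apply_zero, ?image_shift_mem, ?image_sub_mem, hVdW⟩
  case finite =>
    rintro _ ⟨S, R, hS, -, hR, rfl⟩
    exact hS.union (h𝓡.finite R hR)
  case apply_zero =>
    rintro _ ⟨S, R, -, hSQ, hR, rfl⟩ φ (hφ | hφ)
    · obtain ⟨i, hi⟩ := hSQ φ hφ
      exact apply_zero_of_mem_polyMap (mem_succ hi)
    · exact h𝓡.apply_zero R hR φ hφ
  case image_shift_mem =>
    rintro _ ⟨S, R, hS, hSQ, hR, rfl⟩ U hU
    refine ⟨_, _, hU.image2 _ hS, ?_, h𝓡.image_shift_mem R hR U hU, Set.image2_union_right.symm⟩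
    rintro _ ⟨u, -, φ, hφ, rfl⟩
    obtain ⟨i, hi⟩ := hSQ φ hφ
    exact ⟨i, by simpa using add_mem (mem_polyMap_succ.1 (mem_succ hi) u) hi⟩
  case image_sub_mem =>
    rintro _ ⟨S, R, hS, hSQ, hR, rfl⟩ ψ hψ
    refine ⟨_, _, hS.image _, ?_, h𝓡.image_sub_mem R hR ψ (hle hψ), (Set.image_union ..).symm⟩
    rintro _ ⟨φ, hφ, rfl⟩
    obtain ⟨i, hi⟩ := hSQ φ hφ
    exact ⟨i, by simpa only [sub_right_comm] using sub_mem hi hψ⟩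

/-- Translating by `-Q 0` turns the coset of `Q 0` into `polyMap V W d`, to which the induction
hypothesis on the degree applies; only `k` cosets of higher degree remain. -/
theorem IsPolyStable.isVdWFamily_of_mem_adjoinCosets {d k : ℕ}
    (ih : ∀ 𝓡 : Set (Set (V → W)), IsPolyStable g d 𝓡 → ∀ R ∈ 𝓡, ∀ S : Set (V → W),
      S.Finite → S ⊆ polyMap V W d → IsVdWFamily g (S ∪ R))
    {𝓡 : Set (Set (V → W))} (h𝓡 : IsPolyStable g (d + 1) 𝓡) {Q : Fin k → V → W}
    (hQ : ∀ i, Q i ∈ polyMap V W (d + 1)) {X : Set (V → W)} (hX : X ∈ adjoinCosets d Q 𝓡) :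
    IsVdWFamily g X := by
  induction k generalizing X with
  | zero =>
    obtain ⟨S, R, -, hSQ, hR, rfl⟩ := hX
    exact (h𝓡.isVdWFamily R hR).anti <|
      Set.union_subset (fun φ hφ => (hSQ φ hφ).choose.elim0) subset_rfl
  | succ k ihk =>
    obtain ⟨S, R, hS, hSQ, hR, rfl⟩ := hX
    let Q' : Fin k → V → W := fun i => Q i.succ - Q 0
    have hQ' : ∀ i, Q' i ∈ polyMap V W (d + 1) := fun i => sub_mem (hQ i.succ) (hQ 0)
    let low := {φ ∈ (· - Q 0) '' S | φ ∈ polyMap V W d}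
    let high := {φ ∈ (· - Q 0) '' S | φ ∉ polyMap V W d}
    have hhigh : high ∪ (· - Q 0) '' R ∈ adjoinCosets d Q' 𝓡 := by
      refine ⟨_, _, (hS.image _).sep _, ?_, h𝓡.image_sub_mem R hR _ (hQ 0), rfl⟩
      rintro _ ⟨⟨φ, hφ, rfl⟩, hφd⟩
      obtain ⟨i, hi⟩ := hSQ φ hφ
      cases i using Fin.cases with
      | zero => exact absurd hi hφd
      | succ i => exact ⟨i, by simpa [Q'] using hi⟩
    have hvdW := ih _ (isPolyStable_adjoinCosets h𝓡 hQ' fun X hX => ihk hQ' hX) _ hhigh low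
      ((hS.image _).sep _) fun φ hφ => hφ.2
    refine .of_image_sub (Q 0) (hvdW.anti ?_)
    rw [Set.image_union, ← Set.union_assoc]
    exact Set.union_subset_union_left _ fun φ hφ =>
      (Classical.em (φ ∈ polyMap V W d)).imp (⟨hφ, ·⟩) (⟨hφ, ·⟩)

theorem IsPolyStable.isVdWFamily_union {d : ℕ} {𝓡 : Set (Set (V → W))}
    (h𝓡 : IsPolyStable g d 𝓡) {R : Set (V → W)} (hR : R ∈ 𝓡) {S : Set (V → W)} (hS : S.Finite)
    (hSd : S ⊆ polyMap V W d) : IsVdWFamily g (S ∪ R) := by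
  induction d generalizing 𝓡 R S with
  | zero =>
    refine (isVdWFamily_insert_zero (h𝓡.finite R hR) (h𝓡.apply_zero R hR) fun U hU =>
      h𝓡.isVdWFamily _ (h𝓡.image_shift_mem R hR U hU)).anti ?_
    exact Set.union_subset_union_left R fun φ hφ => mem_polyMap_zero.1 (hSd hφ)
  | succ d ih =>
    obtain ⟨k, Q, -, rfl⟩ := hS.fin_param
    refine h𝓡.isVdWFamily_of_mem_adjoinCosets (fun 𝓡' h𝓡' R' hR' S' hS' hS'd =>
      ih h𝓡' hR' hS' hS'd) (fun i => hSd ⟨i, rfl⟩) ⟨_, R, hS, ?_, hR, rfl⟩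
    rintro _ ⟨i, rfl⟩
    exact ⟨i, by rw [sub_self]; exact zero_mem _⟩

theorem isVdWFamily_of_subset_polyMap (g : ℕ → V) {d : ℕ} {S : Set (V → W)} (hS : S.Finite)
    (hSd : S ⊆ polyMap V W d) : IsVdWFamily g S := by
  have hstable : IsPolyStable g d ({∅} : Set (Set (V → W))) :=
    ⟨by simp, by simp, by simp, by simp, by simpa using isVdWFamily_singleton_zero.anti (by simp)⟩
  simpa using hstable.isVdWFamily_union rfl hS hSd

end ColorFocusing

section PolynomialJSets

/-- A J-set with respect to finitely many polynomials: the polynomials are applied to the sums over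
the block `H`, which can moreover be found beyond any given `n`. -/
def IsPolyJSet (A : Set ℕ) : Prop :=
  ∀ S F : Finset (ℕ → ℕ), (∀ P ∈ S, IsPolyZeroConst P) → ∀ n : ℕ,
    ∃ (a : ℕ) (H : Finset ℕ), H.Nonempty ∧ (∀ t ∈ H, n < t) ∧
      ∀ P ∈ S, ∀ f ∈ F, a + P (∑ t ∈ H, f t) ∈ A

theorem IsPolyJSet.mono {A B : Set ℕ} (hA : IsPolyJSet A) (hAB : A ⊆ B) : IsPolyJSet B := by
  intro S F hS n
  obtain ⟨a, H, hH, hn, hmem⟩ := hA S F hS n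
  exact ⟨a, H, hH, hn, fun P hP f hf => hAB (hmem P hP f hf)⟩

theorem IsPolyJSet.of_preimage_add {A : Set ℕ} {x : ℕ} (hA : IsPolyJSet ((x + ·) ⁻¹' A)) :
    IsPolyJSet A := by
  intro S F hS n
  obtain ⟨a, H, hH, hn, hmem⟩ := hA S F hS n
  exact ⟨x + a, H, hH, hn, fun P hP f hf => by simpa [add_assoc] using hmem P hP f hf⟩

theorem exists_monochromatic_add_poly_sum {κ : Type} [Finite κ] (χ : ℕ → κ)
    {S F : Finset (ℕ → ℕ)} (hS : ∀ P ∈ S, IsPolyZeroConst P) (n : ℕ) :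
    ∃ (c : κ) (a : ℕ) (H : Finset ℕ), H.Nonempty ∧ (∀ t ∈ H, n < t) ∧
      ∀ P ∈ S, ∀ f ∈ F, χ (a + P (∑ t ∈ H, f t)) = c := by
  choose! q hq₀ hq using hS
  let Φ (P f : ℕ → ℕ) (v : (ℕ → ℕ) → ℤ) : ℤ := (q P).aeval (v f)
  have hΦ : Set.image2 Φ S F ⊆ polyMap ((ℕ → ℕ) → ℤ) ℤ (S.sup fun P => (q P).natDegree) := by
    rintro _ ⟨P, hP, f, -, rfl⟩
    exact polyMap_mono (Finset.le_sup (f := fun P => (q P).natDegree) hP)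
      (aeval_comp_mem_polyMap (Pi.evalAddMonoidHom (fun _ : ℕ → ℕ => ℤ) f) (hq₀ P hP))
  obtain ⟨M, K, hK, hmono⟩ := isVdWFamily_of_subset_polyMap (fun t f => (f t : ℤ))
    (S.finite_toSet.image2 Φ F.finite_toSet) hΦ κ n
  let m := M.sup Int.natAbs
  obtain ⟨a, ha, H, hH, c, hc⟩ := hmono fun x => χ (x + m).toNat
  have ham : 0 ≤ a + m := by
    have := Finset.le_sup (f := Int.natAbs) ha
    lia
  refine ⟨c, (a + m).toNat, H, (hK H hH).1, (hK H hH).2, fun P hP f hf => ?_⟩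
  have hval : Φ P f (∑ t ∈ H, fun f => (f t : ℤ)) = (P (∑ t ∈ H, f t) : ℕ) := by
    simpa [Φ, hq P hP] using Polynomial.aeval_algebraMap_apply_eq_algebraMap_eval (A := ℤ)
      (∑ t ∈ H, f t) (q P)
  rw [← hc _ (Set.mem_image2_of_mem hP hf), hval]
  congr 1
  lia

theorem exists_isPolyJSet_preimage_singleton {κ : Type} [Finite κ] (χ : ℕ → κ) :
    ∃ c, IsPolyJSet (χ ⁻¹' {c}) := by
  classical
  by_contra! hcon
  have : Fintype κ := Fintype.ofFinite κ
  simp only [IsPolyJSet] at hcon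
  push Not at hcon
  choose S F hS n hbad using hcon
  obtain ⟨c, a, H, hH, hn, hmono⟩ := exists_monochromatic_add_poly_sum χ
    (S := Finset.univ.biUnion S) (F := Finset.univ.biUnion F)
    (fun P hP => by obtain ⟨c, -, hc⟩ := Finset.mem_biUnion.1 hP; exact hS c P hc)
    (Finset.univ.sup n)
  obtain ⟨P, hP, f, hf, hPf⟩ := hbad c a H hH fun t ht =>
    (Finset.le_sup (Finset.mem_univ c)).trans_lt (hn t ht)
  exact hPf (hmono P (Finset.mem_biUnion.2 ⟨c, Finset.mem_univ c, hP⟩) f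
    (Finset.mem_biUnion.2 ⟨c, Finset.mem_univ c, hf⟩))

end PolynomialJSets

section Ultrafilters

theorem exists_ultrafilter_forall_mem {X : Type*} {Q : Set X → Prop}
    (hmono : ∀ ⦃A B⦄, Q A → A ⊆ B → Q B)
    (hcolor : ∀ (𝒜 : Finset (Set X)) (χ : X → 𝒜), ∃ c, Q (χ ⁻¹' {c})) :
    ∃ p : Ultrafilter X, ∀ A ∈ p, Q A := by
  obtain ⟨p, hp⟩ := Ultrafilter.exists_ultrafilter_of_finite_inter_nonempty {A | ¬ Q Aᶜ} <| by
    intro 𝒜 h𝒜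
    by_contra! hempty
    have hmiss (x : X) : ∃ A : 𝒜, x ∉ A.1 := by
      by_contra! hx
      exact Set.eq_empty_iff_forall_notMem.1 hempty x fun A hA => hx ⟨A, hA⟩
    choose χ hχ using hmiss
    obtain ⟨A, hA⟩ := hcolor 𝒜 χ
    refine h𝒜 A.2 (hmono hA ?_)
    rintro x rfl
    exact hχ x
  refine ⟨p, fun A hA => by_contra fun hQ => ?_⟩
  exact Ultrafilter.compl_notMem_iff.2 hA (hp (by simpa using hQ))

theorem isClosed_setOf_ultrafilter_forall_mem {X : Type*} (Q : Set X → Prop) :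
    IsClosed {p : Ultrafilter X | ∀ A ∈ p, Q A} := by
  have : {p : Ultrafilter X | ∀ A ∈ p, Q A} = ⋂ (A) (_ : ¬ Q A), {p : Ultrafilter X | A ∈ p}ᶜ := by
    ext p
    simp only [Set.mem_ofPred_eq, Set.mem_iInter, Set.mem_compl_iff, not_imp_not]
  rw [this]
  exact isClosed_iInter fun A => isClosed_iInter fun _ =>
    (ultrafilter_isOpen_basic A).isClosed_compl

theorem eventually_uAdd {p q : Ultrafilter ℕ} {A : ℕ → Prop} :
    (∀ᶠ z in (uAdd p q : Filter ℕ), A z) ↔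
      ∀ᶠ x in (p : Filter ℕ), ∀ᶠ y in (q : Filter ℕ), A (x + y) :=
  Iff.rfl

attribute [local instance] Ultrafilter.add Ultrafilter.addSemigroup in
theorem exists_idempotentUF_forall_mem {Q : Set ℕ → Prop}
    (hmono : ∀ ⦃A B⦄, Q A → A ⊆ B → Q B)
    (hcolor : ∀ (𝒜 : Finset (Set ℕ)) (χ : ℕ → 𝒜), ∃ c, Q (χ ⁻¹' {c}))
    (htranslate : ∀ ⦃A x⦄, Q ((x + ·) ⁻¹' A) → Q A) :
    ∃ p : Ultrafilter ℕ, IdempotentUF p ∧ ∀ A ∈ p, Q A := by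
  have add_eq_uAdd (p q : Ultrafilter ℕ) : p + q = uAdd p q :=
    Ultrafilter.ext fun A =>
      (Ultrafilter.eventually_add (p := (· ∈ A)) p q).trans eventually_uAdd.symm
  obtain ⟨p, hpQ, hp⟩ := exists_idempotent_in_compact_add_subsemigroup
    Ultrafilter.continuous_add_left {p : Ultrafilter ℕ | ∀ A ∈ p, Q A}
    (exists_ultrafilter_forall_mem hmono hcolor)
    (isClosed_setOf_ultrafilter_forall_mem Q).isCompact fun p _ q hq A hA => by
      rw [add_eq_uAdd] at hA
      obtain ⟨x, hx⟩ := (eventually_uAdd.1 hA).exists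
      exact htranslate (hq _ hx)
  exact ⟨p, (add_eq_uAdd p p).symm.trans hp, hpQ⟩

theorem exists_idempotentUF_isPolyJSet :
    ∃ p : Ultrafilter ℕ, IdempotentUF p ∧ ∀ A ∈ p, IsPolyJSet A :=
  exists_idempotentUF_forall_mem (fun _ _ => IsPolyJSet.mono)
    (fun _ χ => exists_isPolyJSet_preimage_singleton χ) fun _ _ => IsPolyJSet.of_preimage_add

theorem IdempotentUF.eventually_add {p : Ultrafilter ℕ} (hp : IdempotentUF p) {A : ℕ → Prop}
    (hA : ∀ᶠ x in (p : Filter ℕ), A x) :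
    ∀ᶠ x in (p : Filter ℕ), ∀ᶠ y in (p : Filter ℕ), A (x + y) := by
  rwa [← eventually_uAdd, hp]

theorem eventually_tensor_succ {m : ℕ} {p : Fin (m + 1) → Ultrafilter ℕ}
    {A : (Fin (m + 1) → ℕ) → Prop} :
    (∀ᶠ v in (tensor (m + 1) p : Filter (Fin (m + 1) → ℕ)), A v) ↔
      ∀ᶠ x in (p 0 : Filter ℕ),
        ∀ᶠ v in (tensor m fun i => p i.succ : Filter (Fin m → ℕ)), A (Fin.cons x v) :=
  Iff.rfl

end Ultrafilters

section CentralSets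

theorem IsPolyZeroConst.exists_add_eq {P : ℕ → ℕ} (hP : IsPolyZeroConst P) (b : ℕ) :
    ∃ Q, IsPolyZeroConst Q ∧ ∀ v, P (b + v) = P b + Q v := by
  obtain ⟨P', -, hP'⟩ := hP
  let Q := (Polynomial.taylor b P').divX * Polynomial.X
  refine ⟨Q.eval, ⟨Q, by simp [Q], fun _ => rfl⟩, fun v => ?_⟩
  have h := congrArg (Polynomial.eval v) (Polynomial.divX_mul_X_add (Polynomial.taylor b P'))
  rw [Polynomial.eval_add, Polynomial.eval_C, Polynomial.taylor_coeff_zero,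
    Polynomial.taylor_eval] at h
  rw [hP', hP', add_comm b v, ← h, add_comm]

variable {p : Ultrafilter ℕ} {T : Finset (ℕ → ℕ)}

/-- The polynomial shifts `v ↦ P (b i + v) - P (b i)` have zero constant term again, which is what
makes the extension of finitely many pending values an instance of `IsPolyJSet`. -/
theorem exists_block_forall_add_poly_mem (hp : IdempotentUF p) (hpJ : ∀ A ∈ p, IsPolyJSet A)
    (hT : ∀ P ∈ T, IsPolyZeroConst P) {ι : Type*} (I : Finset ι) (A : ι → Set ℕ) (a b : ι → ℕ)
    (hI : ∀ i ∈ I, ∀ P ∈ T, ∀ᶠ y in (p : Filter ℕ), a i + P (b i) + y ∈ A i)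
    (F : Finset (ℕ → ℕ)) (n : ℕ) :
    ∃ (c : ℕ) (H : Finset ℕ), H.Nonempty ∧ (∀ t ∈ H, n < t) ∧
      ∀ i ∈ I, ∀ P ∈ T, ∀ f ∈ F, a i + c + P (b i + ∑ t ∈ H, f t) ∈ A i ∧
        ∀ᶠ y in (p : Filter ℕ), a i + c + P (b i + ∑ t ∈ H, f t) + y ∈ A i := by
  classical
  choose! Q hQ hPQ using fun P (hP : P ∈ T) b => (hT P hP).exists_add_eq b
  have hlarge : ∀ᶠ z in (p : Filter ℕ), ∀ i ∈ I, ∀ P ∈ T,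
      a i + P (b i) + z ∈ A i ∧ ∀ᶠ y in (p : Filter ℕ), a i + P (b i) + z + y ∈ A i := by
    simp only [Filter.eventually_all_finset]
    intro i hi P hP
    simpa only [add_assoc] using (hI i hi P hP).and (hp.eventually_add (hI i hi P hP))
  obtain ⟨c, H, hH, hn, hmem⟩ := hpJ _ hlarge (Finset.image₂ Q T (I.image b)) F (by
    rintro _ h
    obtain ⟨P, hP, b, -, rfl⟩ := Finset.mem_image₂.1 h
    exact hQ P hP b) n
  refine ⟨c, H, hH, hn, fun i hi P hP f hf => ?_⟩
  have hsum : a i + c + P (b i + ∑ t ∈ H, f t) =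
      a i + P (b i) + (c + Q P (b i) (∑ t ∈ H, f t)) := by
    rw [hPQ P hP]
    ring
  rw [hsum]
  exact hmem _ (Finset.mem_image₂_of_mem hP (Finset.mem_image_of_mem b hi)) f hf i hi P hP

/-- The values `α` and `H` of a pair of witnessing functions at one finite set `G`, together with
the finite set of triples `(K, a, b)` of partial sums `a = ∑ i ∈ β, α (G i)` and
`b = ∑ i ∈ β, ∑ t ∈ H (G i), f i t` over the chains that consist of supersets of `K` and end
in `G`. -/
structure Stage where
  α : ℕ
  H : Finset ℕ
  sums : Finset (Finset (ℕ → ℕ) × ℕ × ℕ)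

/-- The stage `d` at `G` continues the stages `s` at the proper subsets of `G`: its block lies
beyond the earlier ones, and its partial sums include the extensions of the earlier ones to `G`. -/
structure Stage.Continues (d : Stage) (G : Finset (ℕ → ℕ)) (s : ∀ F ⊂ G, Stage) : Prop where
  nonempty : d.H.Nonempty
  lt : ∀ F (hF : F ⊂ G), ∀ x ∈ (s F hF).H, ∀ y ∈ d.H, x < y
  start_mem : ∀ K ⊆ G, ∀ f ∈ G, (K, d.α, ∑ t ∈ d.H, f t) ∈ d.sums
  extend_mem : ∀ F (hF : F ⊂ G), ∀ x ∈ (s F hF).sums, ∀ f ∈ G,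
    (x.1, x.2.1 + d.α, x.2.2 + ∑ t ∈ d.H, f t) ∈ d.sums

theorem exists_stage_continues (hp : IdempotentUF p) (hpJ : ∀ A ∈ p, IsPolyJSet A)
    (hT : ∀ P ∈ T, IsPolyZeroConst P) {A : Finset (ℕ → ℕ) → Set ℕ} (hA : ∀ F, A F ∈ p)
    (G : Finset (ℕ → ℕ)) (s : ∀ F ⊂ G, Stage)
    (hs : ∀ F hF, ∀ x ∈ (s F hF).sums, ∀ P ∈ T,
      ∀ᶠ y in (p : Filter ℕ), x.2.1 + P x.2.2 + y ∈ A x.1) :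
    ∃ d : Stage, d.Continues G s ∧ ∀ x ∈ d.sums, ∀ P ∈ T,
      x.2.1 + P x.2.2 ∈ A x.1 ∧ ∀ᶠ y in (p : Filter ℕ), x.2.1 + P x.2.2 + y ∈ A x.1 := by
  classical
  let earlier := G.ssubsets.attach.image fun F => s F.1 (Finset.mem_ssubsets.1 F.2)
  have mem_earlier {F} (hF : F ⊂ G) : s F hF ∈ earlier :=
    Finset.mem_image.2 ⟨⟨F, Finset.mem_ssubsets.2 hF⟩, Finset.mem_attach _ _, rfl⟩
  let pending := G.powerset.image (fun K => (K, 0, 0)) ∪ earlier.biUnion Stage.sums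
  have hpending : ∀ x ∈ pending, ∀ P ∈ T,
      ∀ᶠ y in (p : Filter ℕ), x.2.1 + P x.2.2 + y ∈ A x.1 := by
    intro x hx P hP
    rcases Finset.mem_union.1 hx with hx | hx
    · obtain ⟨K, -, rfl⟩ := Finset.mem_image.1 hx
      obtain ⟨Q, hQ, hPQ⟩ := hT P hP
      have hP0 : P 0 = 0 := by rw [hPQ, ← Polynomial.coeff_zero_eq_eval_zero, hQ]
      simpa [hP0] using hA K
    · obtain ⟨d, hd, hxd⟩ := Finset.mem_biUnion.1 hx
      obtain ⟨F, -, rfl⟩ := Finset.mem_image.1 hd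
      exact hs F.1 _ x hxd P hP
  obtain ⟨c, H, hH, hlt, hmem⟩ := exists_block_forall_add_poly_mem hp hpJ hT pending
    (fun x => A x.1) (fun x => x.2.1) (fun x => x.2.2) hpending G ((earlier.biUnion Stage.H).sup id)
  refine ⟨⟨c, H, Finset.image₂ (fun x f => (x.1, x.2.1 + c, x.2.2 + ∑ t ∈ H, f t)) pending G⟩,
    ⟨hH, fun F hF x hx y hy => ?_, fun K hK f hf => ?_, fun F hF x hx f hf => ?_⟩, ?_⟩
  · exact (Finset.le_sup (f := id) (Finset.mem_biUnion.2 ⟨_, mem_earlier hF, hx⟩)).trans_lt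
      (hlt y hy)
  · exact Finset.mem_image₂.2 ⟨(K, 0, 0), Finset.mem_union_left _
      (Finset.mem_image_of_mem _ (Finset.mem_powerset.2 hK)), f, hf, by simp⟩
  · exact Finset.mem_image₂_of_mem
      (Finset.mem_union_right _ (Finset.mem_biUnion.2 ⟨_, mem_earlier hF, hx⟩)) hf
  · intro z hz P hP
    obtain ⟨x, hx, f, hf, rfl⟩ := Finset.mem_image₂.1 hz
    exact hmem x hx P hP f hf

theorem exists_forall_stage_continues (hp : IdempotentUF p) (hpJ : ∀ A ∈ p, IsPolyJSet A)
    (hT : ∀ P ∈ T, IsPolyZeroConst P) {A : Finset (ℕ → ℕ) → Set ℕ} (hA : ∀ F, A F ∈ p) :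
    ∃ s : Finset (ℕ → ℕ) → Stage, ∀ G, (s G).Continues G (fun F _ => s F) ∧
      ∀ x ∈ (s G).sums, ∀ P ∈ T, x.2.1 + P x.2.2 ∈ A x.1 := by
  let GoodStage := {d : Stage // ∀ x ∈ d.sums, ∀ P ∈ T,
    x.2.1 + P x.2.2 ∈ A x.1 ∧ ∀ᶠ y in (p : Filter ℕ), x.2.1 + P x.2.2 + y ∈ A x.1}
  have hnext (G : Finset (ℕ → ℕ)) (s : ∀ F ⊂ G, GoodStage) :
      ∃ d : GoodStage, d.1.Continues G fun F hF => (s F hF).1 := by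
    obtain ⟨d, hd, hgood⟩ := exists_stage_continues hp hpJ hT hA G (fun F hF => (s F hF).1)
      fun F hF x hx P hP => ((s F hF).2 x hx P hP).2
    exact ⟨⟨d, hgood⟩, hd⟩
  choose next hnext using hnext
  let s : Finset (ℕ → ℕ) → GoodStage := Finset.strongInduction next
  refine ⟨fun G => (s G).1, fun G => ⟨?_, fun x hx P hP => ((s G).2 x hx P hP).1⟩⟩
  have hG : s G = next G fun F _ => s F := Finset.strongInduction_eq next G
  change (s G).1.Continues G fun F _ => (s F).1
  exact hG ▸ hnext G fun F _ => s F

variable {s : Finset (ℕ → ℕ) → Stage}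

theorem partialSum_mem_sums (hs : ∀ G, (s G).Continues G fun F _ => s F) {G : ℕ → Finset (ℕ → ℕ)}
    (hG : StrictMono G) {f : ℕ → ℕ → ℕ} (hf : ∀ i, f i ∈ G i) {K : Finset (ℕ → ℕ)}
    {β : Finset ℕ} (hK : ∀ i ∈ β, K ⊆ G i) {n : ℕ} (hn : IsGreatest β n) :
    (K, ∑ i ∈ β, (s (G i)).α, ∑ i ∈ β, ∑ t ∈ (s (G i)).H, f i t) ∈ (s (G n)).sums := by
  induction β using Finset.induction_on_max generalizing n with
  | empty => simpa using hn.1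
  | insert a β hβ ih =>
    have haβ : a ∉ β := fun ha => (hβ a ha).false
    obtain rfl : n = a := hn.unique
      ⟨by simp, fun i hi => (Finset.mem_insert.1 hi).elim le_of_eq fun h => (hβ i h).le⟩
    rw [Finset.sum_insert haβ, Finset.sum_insert haβ, add_comm (s (G n)).α,
      add_comm (∑ t ∈ (s (G n)).H, f n t)]
    rcases β.eq_empty_or_nonempty with rfl | hne
    · simpa using (hs (G n)).start_mem K (hK n (by simp)) (f n) (hf n)
    · exact (hs (G n)).extend_mem _ (hG (hβ _ (β.max'_mem hne))) _
        (ih (fun i hi => hK i (Finset.mem_insert_of_mem hi)) (β.isGreatest_max' hne)) _ (hf n)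

/-- Witnessing functions of the multidimensional polynomial central sets theorem, in a relative form
needed for the induction on `m`: the target set may depend on a finite set `F` of functions, as long
as the chain consists of supersets of `F` wherever it is used. -/
structure IsCentralWitness {m : ℕ} (T : Finset (ℕ → ℕ)) (C : Finset (ℕ → ℕ) → Set (Fin m → ℕ))
    (α : Fin m → Finset (ℕ → ℕ) → ℕ) (H : Fin m → Finset (ℕ → ℕ) → Finset ℕ) : Prop where
  nonempty : ∀ l F, (H l F).Nonempty
  lt : ∀ l F G, F ⊂ G → ∀ x ∈ H l F, ∀ y ∈ H l G, x < y
  mem : ∀ F (G : ℕ → Finset (ℕ → ℕ)), StrictMono G → ∀ f : ℕ → ℕ → ℕ, (∀ i, f i ∈ G i) →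
    ∀ P : Fin m → ℕ → ℕ, (∀ l, P l ∈ T) → ∀ β : Fin m → Finset ℕ, (∀ l, (β l).Nonempty) →
    (∀ l l', l < l' → ∀ x ∈ β l, ∀ y ∈ β l', x < y) → (∀ l, ∀ i ∈ β l, F ⊆ G i) →
    (fun l => ∑ i ∈ β l, α l (G i) + P l (∑ i ∈ β l, ∑ t ∈ H l (G i), f i t)) ∈ C F

/-- The first entry of a tuple is determined by a partial sum at the last set `F` of the first
block, and all sets of the later blocks contain `F`, so `h` applies to the remaining entries. -/
theorem IsCentralWitness.cons (hs : ∀ G, (s G).Continues G fun F _ => s F) {m : ℕ}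
    {C : Finset (ℕ → ℕ) → Set (Fin (m + 1) → ℕ)} {α : Fin m → Finset (ℕ → ℕ) → ℕ}
    {H : Fin m → Finset (ℕ → ℕ) → Finset ℕ}
    (h : IsCentralWitness T
      (fun F => {v | ∀ x ∈ (s F).sums, ∀ P ∈ T, Fin.cons (x.2.1 + P x.2.2) v ∈ C x.1}) α H) :
    IsCentralWitness T C (Fin.cons (fun F => (s F).α) α) (Fin.cons (fun F => (s F).H) H) where
  nonempty := Fin.cases (fun F => (hs F).nonempty) h.nonempty
  lt := Fin.cases (fun F G hFG => (hs G).lt F hFG) h.lt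
  mem F G hG f hf P hP β hβ hβlt hF := by
    let n := (β 0).max' (hβ 0)
    have hn : IsGreatest (β 0 : Set ℕ) n := (β 0).isGreatest_max' (hβ 0)
    have htail := h.mem (G n) G hG f hf (fun l => P l.succ) (fun l => hP l.succ)
      (fun l => β l.succ) (fun l => hβ l.succ)
      (fun l l' hl => hβlt l.succ l'.succ (Fin.succ_lt_succ_iff.2 hl))
      fun l i hi => hG.monotone (hβlt 0 l.succ l.succ_pos n hn.1 i hi).le
    convert htail _ (partialSum_mem_sums hs hG hf (hF 0) hn) (P 0) (hP 0) using 1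
    exact (Fin.cons_self_tail _).symm

theorem exists_isCentralWitness (hp : IdempotentUF p) (hpJ : ∀ A ∈ p, IsPolyJSet A)
    (hT : ∀ P ∈ T, IsPolyZeroConst P) {m : ℕ} {C : Finset (ℕ → ℕ) → Set (Fin m → ℕ)}
    (hC : ∀ F, C F ∈ tensor m fun _ => p) : ∃ α H, IsCentralWitness T C α H := by
  induction m with
  | zero =>
    refine ⟨Fin.elim0, Fin.elim0, fun l => l.elim0, fun l => l.elim0, fun F => ?_⟩
    intros
    convert Ultrafilter.mem_pure.1 (hC F)
  | succ m ih =>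
    obtain ⟨s, hs⟩ := exists_forall_stage_continues hp hpJ hT
      fun F => eventually_tensor_succ.1 (hC F)
    have htail (F : Finset (ℕ → ℕ)) : {v | ∀ x ∈ (s F).sums, ∀ P ∈ T,
        Fin.cons (x.2.1 + P x.2.2) v ∈ C x.1} ∈ tensor m fun _ => p := by
      change ∀ᶠ v in (tensor m fun _ => p : Filter (Fin m → ℕ)), _
      simp only [Filter.eventually_all_finset]
      exact (hs F).2
    obtain ⟨α, H, h⟩ := ih htail
    exact ⟨_, _, h.cons fun G => (hs G).1⟩

theorem exists_monochromatic_isCentralWitness {κ : Type*} [Finite κ]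
    (hT : ∀ P ∈ T, IsPolyZeroConst P) {m : ℕ} (χ : (Fin m → ℕ) → κ) :
    ∃ c α H, IsCentralWitness T (fun _ => χ ⁻¹' {c}) α H := by
  obtain ⟨p, hp, hpJ⟩ := exists_idempotentUF_isPolyJSet
  obtain ⟨c, hc⟩ := (Ultrafilter.eventually_exists_iff (f := tensor m fun _ => p)
    (P := fun c x => χ x = c)).1 (.of_forall fun x => ⟨χ x, rfl⟩)
  exact ⟨c, exists_isCentralWitness hp hpJ hT fun _ => hc⟩

end CentralSets

/-- Equivalence of the multidimensional monochromatic form and the linear-combination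
monochromatic form of the polynomial stronger central sets theorem (m-tuples of
witnessing functions). -/
theorem equivalence_multidim_vs_linear_comb_II
    (T : Finset (ℕ → ℕ)) (hT : T.Nonempty) (hTP : ∀ P ∈ T, IsPolyZeroConst P) :
    (∀ r m : ℕ, 1 ≤ r → 1 ≤ m → ∀ χ : (Fin m → ℕ) → Fin r,
      ∃ (j : Fin r) (α : Fin m → Finset (ℕ → ℕ) → ℕ)
        (H : Fin m → Finset (ℕ → ℕ) → Finset ℕ),
        (∀ (l : Fin m) (F : Finset (ℕ → ℕ)), F.Nonempty → (H l F).Nonempty) ∧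
        (∀ (l : Fin m) (F G : Finset (ℕ → ℕ)), F.Nonempty → F ⊂ G →
          ∀ x ∈ H l F, ∀ y ∈ H l G, x < y) ∧
        (∀ G : ℕ → Finset (ℕ → ℕ),
          (∀ i, (G i).Nonempty) → (∀ i j', i < j' → G i ⊂ G j') →
          ∀ f : ℕ → ℕ → ℕ, (∀ i, f i ∈ G i) →
          ∀ P : Fin m → ℕ → ℕ, (∀ l, P l ∈ T) →
          ∀ β : Fin m → Finset ℕ,
            (∀ l, (β l).Nonempty) →
            (∀ l l' : Fin m, l < l' → ∀ x ∈ β l, ∀ y ∈ β l', x < y) →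
            χ (fun l => (∑ i ∈ β l, α l (G i)) +
                P l (∑ i ∈ β l, ∑ t ∈ H l (G i), f i t)) = j))
    ↔
    (∀ r m : ℕ, 1 ≤ r → 1 ≤ m → ∀ a : Fin m → ℕ, ∀ χ : ℕ → Fin r,
      ∃ (j : Fin r) (α : Fin m → Finset (ℕ → ℕ) → ℕ)
        (H : Fin m → Finset (ℕ → ℕ) → Finset ℕ),
        (∀ (l : Fin m) (F : Finset (ℕ → ℕ)), F.Nonempty → (H l F).Nonempty) ∧
        (∀ (l : Fin m) (F G : Finset (ℕ → ℕ)), F.Nonempty → F ⊂ G →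
          ∀ x ∈ H l F, ∀ y ∈ H l G, x < y) ∧
        (∀ G : ℕ → Finset (ℕ → ℕ),
          (∀ i, (G i).Nonempty) → (∀ i j', i < j' → G i ⊂ G j') →
          ∀ f : ℕ → ℕ → ℕ, (∀ i, f i ∈ G i) →
          ∀ P : Fin m → ℕ → ℕ, (∀ l, P l ∈ T) →
          ∀ β : Fin m → Finset ℕ,
            (∀ l, (β l).Nonempty) →
            (∀ l l' : Fin m, l < l' → ∀ x ∈ β l, ∀ y ∈ β l', x < y) →
            χ (∑ l : Fin m, a l * ((∑ i ∈ β l, α l (G i)) +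
                P l (∑ i ∈ β l, ∑ t ∈ H l (G i), f i t))) = j)) := by
  refine ⟨fun h r m hr hm a χ => h r m hr hm fun x => χ (∑ l, a l * x l),
    fun _ r m _ _ χ => ?_⟩
  obtain ⟨j, α, H, hw⟩ := exists_monochromatic_isCentralWitness hTP χ
  refine ⟨j, α, H, fun l F _ => hw.nonempty l F, fun l F G _ => hw.lt l F G, ?_⟩
  intro G _ hG f hf P hP β hβ hβlt
  exact hw.mem ∅ G (fun i j => hG i j) f hf P hP β hβ hβlt fun _ _ _ => Finset.empty_subset _

end MultiCST
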